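/- Let A and B be n×n matrices with nonnegative real entries. Then Tr(A ⊕ B) = max( Tr(A), Tr(B), max_{k=1,…,n−1} max_{m=1,…,n−k} tr(F_{km}) ), where F_{km} denotes the entrywise maximum, over all tuples of nonnegative integers (i_0, i_1, …, i_k) with i_0 + i_1 + ⋯ + i_k = m, of the max-times products A^{⊗i_0} ⊗ B ⊗ A^{⊗i_1} ⊗ B ⊗ ⋯ ⊗ B ⊗ A^{⊗i_k} (with exactly k factors B). -/

import Mathlib

/-!
Expanding `(A ⊕ B)^{⊗p}` gives the entrywise maximum of all words of length `p` in the letters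
`A` and `B`, and a word with `k` letters `B` is exactly an alternating product `mtChain A B k v`
with `∑ v + k = p`. Both halves of this expansion are stated as entrywise inequalities:
`mtChain_le_mtPow_max` bounds every alternating product by the power of `A ⊕ B`, and
`exists_mtPow_max_le_mtChain` finds, for each entry of the power, an alternating product
dominating it. Words without `B` are powers of `A`, words without `A` are powers of `B`, and all
others, with `1 ≤ p ≤ n`, are accounted for by the `F_{km}`.

Suprema here are real-valued, so an empty one is `0`; since all entries are nonnegative this is
harmless, and every upper bound that is used is required to be nonnegative.
-/

open scoped BigOperators

/-- Max-times matrix product: `(A ⊗ B) i j = max_k A i k * B k j`. -/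
noncomputable def mtMul {n : ℕ} (A B : Matrix (Fin n) (Fin n) ℝ) : Matrix (Fin n) (Fin n) ℝ :=
  fun i j => ⨆ k, A i k * B k j

/-- Max-times matrix power, with `A^{⊗0}` the identity matrix. -/
noncomputable def mtPow {n : ℕ} (A : Matrix (Fin n) (Fin n) ℝ) : ℕ → Matrix (Fin n) (Fin n) ℝ
  | 0 => 1
  | k + 1 => mtMul A (mtPow A k)

/-- Tropical trace: `tr A = max_i A i i`. -/
noncomputable def mtTrace {n : ℕ} (A : Matrix (Fin n) (Fin n) ℝ) : ℝ :=
  ⨆ i, A i i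

/-- The function `Tr(A) = max_{k=1,…,n} tr(A^{⊗k})`. -/
noncomputable def mtTr {n : ℕ} (A : Matrix (Fin n) (Fin n) ℝ) : ℝ :=
  ⨆ k ∈ Finset.Icc 1 n, mtTrace (mtPow A k)

/-- Kleene star: entrywise maximum of `I, A, A^{⊗2}, …, A^{⊗(n-1)}`. -/
noncomputable def mtStar {n : ℕ} (A : Matrix (Fin n) (Fin n) ℝ) : Matrix (Fin n) (Fin n) ℝ :=
  fun i j => ⨆ k ∈ Finset.range n, mtPow A k i j

/-- Max-times matrix-vector product: `(A ⊗ x) i = max_j A i j * x j`. -/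
noncomputable def mtVec {n : ℕ} (A : Matrix (Fin n) (Fin n) ℝ) (x : Fin n → ℝ) : Fin n → ℝ :=
  fun i => ⨆ j, A i j * x j

/-- The alternating product `A^{⊗v 0} ⊗ B ⊗ A^{⊗v 1} ⊗ B ⊗ ⋯ ⊗ B ⊗ A^{⊗v k}`
(with exactly `k` factors `B`). -/
noncomputable def mtChain {n : ℕ} (A B : Matrix (Fin n) (Fin n) ℝ) :
    (k : ℕ) → (Fin (k + 1) → ℕ) → Matrix (Fin n) (Fin n) ℝ
  | 0, v => mtPow A (v 0)
  | k + 1, v => mtMul (mtPow A (v 0)) (mtMul B (mtChain A B k fun t => v t.succ))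

/-- `F_{km}`: the entrywise maximum, over all tuples `(i_0,…,i_k)` of nonnegative integers
with `i_0 + ⋯ + i_k = m`, of the products `A^{⊗i_0} ⊗ B ⊗ A^{⊗i_1} ⊗ ⋯ ⊗ B ⊗ A^{⊗i_k}`. -/
noncomputable def mtF {n : ℕ} (A B : Matrix (Fin n) (Fin n) ℝ) (k m : ℕ) :
    Matrix (Fin n) (Fin n) ℝ :=
  fun i j => ⨆ v : { v : Fin (k + 1) → ℕ // ∑ t, v t = m }, mtChain A B k v.1 i j

/-- `h^− M g = max_{i,j} M i j * g j / h i`. -/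
noncomputable def mtHMG {n : ℕ} (h : Fin n → ℝ) (M : Matrix (Fin n) (Fin n) ℝ)
    (g : Fin n → ℝ) : ℝ :=
  ⨆ i, ⨆ j, M i j * g j / h i

theorem biSup_finset_le {s : Finset ℕ} {f : ℕ → ℝ} {c : ℝ} (hc : 0 ≤ c)
    (h : ∀ k ∈ s, f k ≤ c) : ⨆ k ∈ s, f k ≤ c :=
  Real.iSup_le (fun k => Real.iSup_le (fun hk => h k hk) hc) hc

theorem le_biSup_finset {s : Finset ℕ} {f : ℕ → ℝ} (hf : ∀ k, 0 ≤ f k) {k : ℕ} (hk : k ∈ s) :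
    f k ≤ ⨆ k ∈ s, f k := by
  have hb : BddAbove (Set.range fun k => ⨆ _ : k ∈ s, f k) := by
    refine ⟨∑ k ∈ s, f k, ?_⟩
    rintro _ ⟨l, rfl⟩
    exact Real.iSup_le (fun hl => Finset.single_le_sum (fun i _ => hf i) hl)
      (Finset.sum_nonneg fun i _ => hf i)
  have h := le_ciSup hb k
  simpa [hk] using h

section MaxTimes

variable {n : ℕ} {A B X Y Z X' Y' : Matrix (Fin n) (Fin n) ℝ}

theorem mtMul_nonneg (hX : ∀ i j, 0 ≤ X i j) (hY : ∀ i j, 0 ≤ Y i j) (i j : Fin n) :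
    0 ≤ mtMul X Y i j :=
  Real.iSup_nonneg fun k => mul_nonneg (hX i k) (hY k j)

theorem le_mtMul (X Y : Matrix (Fin n) (Fin n) ℝ) (i k j : Fin n) :
    X i k * Y k j ≤ mtMul X Y i j :=
  le_ciSup (f := fun k => X i k * Y k j) (Set.finite_range _).bddAbove k

theorem mtMul_le {i j : Fin n} {c : ℝ} (h : ∀ k, X i k * Y k j ≤ c) : mtMul X Y i j ≤ c := by
  have : Nonempty (Fin n) := ⟨i⟩
  exact ciSup_le h

theorem mtMul_mono (hX' : ∀ i j, 0 ≤ X' i j) (hY : ∀ i j, 0 ≤ Y i j)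
    (hXX : ∀ i j, X i j ≤ X' i j) (hYY : ∀ i j, Y i j ≤ Y' i j) (i j : Fin n) :
    mtMul X Y i j ≤ mtMul X' Y' i j :=
  mtMul_le fun k =>
    (mul_le_mul (hXX i k) (hYY k j) (hY k j) (hX' i k)).trans (le_mtMul X' Y' i k j)

theorem mtMul_assoc (hX : ∀ i j, 0 ≤ X i j) (hZ : ∀ i j, 0 ≤ Z i j) :
    mtMul (mtMul X Y) Z = mtMul X (mtMul Y Z) := by
  ext i j
  apply le_antisymm
  · refine mtMul_le fun k => ?_
    rw [mtMul, Real.iSup_mul_of_nonneg (hZ k j)]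
    have : Nonempty (Fin n) := ⟨i⟩
    refine ciSup_le fun l => ?_
    rw [mul_assoc]
    exact (mul_le_mul_of_nonneg_left (le_mtMul Y Z l k j) (hX i l)).trans
      (le_mtMul X (mtMul Y Z) i l j)
  · refine mtMul_le fun l => ?_
    rw [mtMul, Real.mul_iSup_of_nonneg (hX i l)]
    have : Nonempty (Fin n) := ⟨i⟩
    refine ciSup_le fun k => ?_
    rw [← mul_assoc]
    exact (mul_le_mul_of_nonneg_right (le_mtMul X Y i l k) (hZ k j)).trans
      (le_mtMul (mtMul X Y) Z i k j)

theorem one_mtMul (hX : ∀ i j, 0 ≤ X i j) : mtMul 1 X = X := by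
  ext i j
  apply le_antisymm
  · refine mtMul_le fun k => ?_
    by_cases h : i = k
    · subst h; simp
    · simpa [h] using hX i j
  · simpa using le_mtMul 1 X i i j

theorem mtPow_nonneg (hA : ∀ i j, 0 ≤ A i j) (p : ℕ) : ∀ i j, 0 ≤ mtPow A p i j := by
  induction p with
  | zero =>
    intro i j
    by_cases h : i = j <;> simp [mtPow, Matrix.one_apply, h]
  | succ p ih => exact mtMul_nonneg hA ih

theorem mtPow_mono (hA : ∀ i j, 0 ≤ A i j) (hAB : ∀ i j, A i j ≤ B i j) (p : ℕ) :
    ∀ i j, mtPow A p i j ≤ mtPow B p i j := by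
  induction p with
  | zero => exact fun _ _ => le_rfl
  | succ p ih =>
    exact mtMul_mono (fun i j => (hA i j).trans (hAB i j)) (mtPow_nonneg hA p) hAB ih

theorem mtPow_add (hA : ∀ i j, 0 ≤ A i j) (p q : ℕ) :
    mtMul (mtPow A p) (mtPow A q) = mtPow A (p + q) := by
  induction p with
  | zero => rw [Nat.zero_add]; exact one_mtMul (mtPow_nonneg hA q)
  | succ p ih =>
    rw [Nat.succ_add]
    change mtMul (mtMul A (mtPow A p)) (mtPow A q) = mtMul A (mtPow A (p + q))
    rw [mtMul_assoc hA (mtPow_nonneg hA q), ih]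

theorem mtChain_nonneg (hA : ∀ i j, 0 ≤ A i j) (hB : ∀ i j, 0 ≤ B i j) (k : ℕ) :
    ∀ (v : Fin (k + 1) → ℕ) (i j : Fin n), 0 ≤ mtChain A B k v i j := by
  induction k with
  | zero => exact fun v => mtPow_nonneg hA (v 0)
  | succ k ih => exact fun v => mtMul_nonneg (mtPow_nonneg hA _) (mtMul_nonneg hB (ih _))

theorem mtChain_zero_eq_mtPow (hB : ∀ i j, 0 ≤ B i j) (k : ℕ) :
    mtChain A B k (fun _ => 0) = mtPow B k := by
  induction k with
  | zero => rfl
  | succ k ih =>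
    change mtMul 1 (mtMul B (mtChain A B k fun _ => 0)) = mtMul B (mtPow B k)
    rw [ih, one_mtMul (mtMul_nonneg hB (mtPow_nonneg hB k))]

/-- Prepending a letter `A` to a word raises the first exponent of the alternating product. -/
theorem mtMul_mtChain (hA : ∀ i j, 0 ≤ A i j) (hB : ∀ i j, 0 ≤ B i j) (k a : ℕ)
    (v : Fin k → ℕ) :
    mtMul A (mtChain A B k (Fin.cons a v)) = mtChain A B k (Fin.cons (a + 1) v) := by
  cases k with
  | zero => rfl
  | succ k => exact (mtMul_assoc hA (mtMul_nonneg hB (mtChain_nonneg hA hB k _))).symm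

theorem mtChain_le_mtPow_max (hA : ∀ i j, 0 ≤ A i j) (hB : ∀ i j, 0 ≤ B i j) (k : ℕ) :
    ∀ (v : Fin (k + 1) → ℕ) (i j : Fin n),
      mtChain A B k v i j ≤ mtPow (fun i j => max (A i j) (B i j)) (∑ t, v t + k) i j := by
  have hC : ∀ i j, 0 ≤ max (A i j) (B i j) := fun i j => le_max_of_le_left (hA i j)
  induction k with
  | zero =>
    intro v
    rw [Fin.sum_univ_one]
    exact mtPow_mono hA (fun i j => le_max_left _ _) (v 0)
  | succ k ih =>
    intro v
    rw [Fin.sum_univ_succ, add_assoc, ← add_assoc _ k 1, ← mtPow_add hC]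
    exact mtMul_mono (mtPow_nonneg hC _) (mtMul_nonneg hB (mtChain_nonneg hA hB k _))
      (mtPow_mono hA (fun i j => le_max_left _ _) _)
      (mtMul_mono hC (mtChain_nonneg hA hB k _) (fun i j => le_max_right _ _) (ih _))

/-- Each entry of a power of `A ⊕ B` is dominated by the entry of a single word in `A` and `B`;
the word may depend on the entry. -/
theorem exists_mtPow_max_le_mtChain (hA : ∀ i j, 0 ≤ A i j) (hB : ∀ i j, 0 ≤ B i j) (p : ℕ) :
    ∀ i j : Fin n, ∃ (k : ℕ) (v : Fin (k + 1) → ℕ), ∑ t, v t + k = p ∧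
      mtPow (fun i j => max (A i j) (B i j)) p i j ≤ mtChain A B k v i j := by
  induction p with
  | zero => exact fun i j => ⟨0, fun _ => 0, by simp, le_rfl⟩
  | succ p ih =>
    intro i j
    have : Nonempty (Fin n) := ⟨i⟩
    -- The maximum defining the `(i, j)` entry is attained at some intermediate index `l`.
    obtain ⟨l, hl⟩ := exists_eq_ciSup_of_finite
      (f := fun l => max (A i l) (B i l) * mtPow (fun i j => max (A i j) (B i j)) p l j)
    obtain ⟨k, v, hv, hle⟩ := ih l j
    have hpow : mtPow (fun i j => max (A i j) (B i j)) (p + 1) i j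
        ≤ max (A i l) (B i l) * mtChain A B k v l j :=
      hl.symm.le.trans (mul_le_mul_of_nonneg_left hle (le_max_of_le_left (hA i l)))
    rcases le_total (B i l) (A i l) with h | h
    · refine ⟨k, Fin.cons (v 0 + 1) (Fin.tail v), ?_, ?_⟩
      · rw [Fin.sum_univ_succ] at hv ⊢
        simp only [Fin.cons_zero, Fin.cons_succ, Fin.tail]
        omega
      · rw [max_eq_left h] at hpow
        rw [← mtMul_mtChain hA hB, Fin.cons_self_tail]
        exact hpow.trans (le_mtMul _ _ i l j)
    · refine ⟨k + 1, Fin.cons 0 v, ?_, ?_⟩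
      · rw [Fin.sum_univ_succ]
        simp only [Fin.cons_zero, Fin.cons_succ]
        omega
      · rw [max_eq_right h] at hpow
        change _ ≤ mtMul 1 (mtMul B (mtChain A B k v)) i j
        rw [one_mtMul (mtMul_nonneg hB (mtChain_nonneg hA hB k v))]
        exact hpow.trans (le_mtMul _ _ i l j)

theorem mtTrace_nonneg (hX : ∀ i j, 0 ≤ X i j) : 0 ≤ mtTrace X :=
  Real.iSup_nonneg fun i => hX i i

theorem le_mtTrace (X : Matrix (Fin n) (Fin n) ℝ) (i : Fin n) : X i i ≤ mtTrace X :=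
  le_ciSup (f := fun i => X i i) (Set.finite_range _).bddAbove i

theorem mtTr_nonneg (hX : ∀ i j, 0 ≤ X i j) : 0 ≤ mtTr X :=
  Real.iSup_nonneg fun k => Real.iSup_nonneg fun _ => mtTrace_nonneg (mtPow_nonneg hX k)

theorem mtPow_diag_le_mtTr (hX : ∀ i j, 0 ≤ X i j) {p : ℕ} (h1 : 1 ≤ p) (hn : p ≤ n)
    (i : Fin n) : mtPow X p i i ≤ mtTr X :=
  (le_mtTrace _ i).trans (le_biSup_finset (f := fun k => mtTrace (mtPow X k))
    (fun k => mtTrace_nonneg (mtPow_nonneg hX k)) (Finset.mem_Icc.2 ⟨h1, hn⟩))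

theorem mtTr_le {c : ℝ} (hc : 0 ≤ c)
    (h : ∀ p, 1 ≤ p → p ≤ n → ∀ i : Fin n, mtPow X p i i ≤ c) : mtTr X ≤ c :=
  biSup_finset_le hc fun p hp =>
    Real.iSup_le (h p (Finset.mem_Icc.1 hp).1 (Finset.mem_Icc.1 hp).2) hc

theorem mtF_nonneg (hA : ∀ i j, 0 ≤ A i j) (hB : ∀ i j, 0 ≤ B i j) (k m : ℕ) (i j : Fin n) :
    0 ≤ mtF A B k m i j :=
  Real.iSup_nonneg fun v => mtChain_nonneg hA hB k v.1 i j

theorem mtChain_le_mtF (A B : Matrix (Fin n) (Fin n) ℝ) (k : ℕ) (v : Fin (k + 1) → ℕ)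
    (i j : Fin n) : mtChain A B k v i j ≤ mtF A B k (∑ t, v t) i j := by
  -- A composition has entries bounded by its sum, so there are finitely many of them.
  have : Finite { w : Fin (k + 1) → ℕ // ∑ t, w t = ∑ t, v t } := by
    refine Set.Finite.subset (Set.finite_Iic fun _ : Fin (k + 1) => ∑ t, v t) ?_
    intro w hw t
    exact (Finset.single_le_sum (fun _ _ => Nat.zero_le _) (Finset.mem_univ t)).trans_eq hw
  exact le_ciSup (f := fun w : { w : Fin (k + 1) → ℕ // ∑ t, w t = ∑ t, v t } =>
    mtChain A B k w.1 i j) (Set.finite_range _).bddAbove ⟨v, rfl⟩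

end MaxTimes

/-- Binomial identity for the trace function:
`Tr(A ⊕ B) = max(Tr A, Tr B, max_{k,m} tr F_{km})`. -/
theorem max_times_binomial_Tr {n : ℕ} (A B : Matrix (Fin n) (Fin n) ℝ)
    (hA : ∀ i j, 0 ≤ A i j) (hB : ∀ i j, 0 ≤ B i j) :
    mtTr (fun i j => max (A i j) (B i j)) =
      max (mtTr A)
        (max (mtTr B)
          (⨆ k ∈ Finset.Icc 1 (n - 1), ⨆ m ∈ Finset.Icc 1 (n - k),
            mtTrace (mtF A B k m))) := by
  have hC : ∀ i j, 0 ≤ max (A i j) (B i j) := fun i j => le_max_of_le_left (hA i j)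
  have hT : ∀ k m, 0 ≤ mtTrace (mtF A B k m) := fun k m => mtTrace_nonneg (mtF_nonneg hA hB k m)
  apply le_antisymm
  · refine mtTr_le (le_max_of_le_left (mtTr_nonneg hA)) fun p h1 hn i => ?_
    obtain ⟨k, v, hv, hle⟩ := exists_mtPow_max_le_mtChain hA hB p i i
    refine hle.trans ?_
    rcases Nat.eq_zero_or_pos k with rfl | hk
    · refine le_max_of_le_left (mtPow_diag_le_mtTr hA ?_ ?_ i) <;>
        (rw [Fin.sum_univ_one] at hv; omega)
    refine le_max_of_le_right ?_
    rcases Nat.eq_zero_or_pos (∑ t, v t) with hm | hm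
    · have hv0 : v = fun _ => 0 := funext fun t => Finset.sum_eq_zero_iff.1 hm t (Finset.mem_univ t)
      rw [hv0, mtChain_zero_eq_mtPow hB]
      exact le_max_of_le_left (mtPow_diag_le_mtTr hB hk (by omega) i)
    · refine le_max_of_le_right ?_
      refine (mtChain_le_mtF A B k v i i).trans ((le_mtTrace _ i).trans ?_)
      refine (le_biSup_finset (s := Finset.Icc 1 (n - k)) (f := fun m => mtTrace (mtF A B k m))
        (hT k) (Finset.mem_Icc.2 ⟨hm, by omega⟩)).trans ?_
      exact le_biSup_finset
        (f := fun k => ⨆ m ∈ Finset.Icc 1 (n - k), mtTrace (mtF A B k m))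
        (fun k => Real.iSup_nonneg fun m => Real.iSup_nonneg fun _ => hT k m)
        (Finset.mem_Icc.2 ⟨hk, by omega⟩)
  · have h0 := mtTr_nonneg hC
    refine max_le ?_ (max_le ?_ ?_)
    · exact mtTr_le h0 fun p h1 hn i =>
        (mtPow_mono hA (fun i j => le_max_left _ _) p i i).trans (mtPow_diag_le_mtTr hC h1 hn i)
    · exact mtTr_le h0 fun p h1 hn i =>
        (mtPow_mono hB (fun i j => le_max_right _ _) p i i).trans (mtPow_diag_le_mtTr hC h1 hn i)
    · refine biSup_finset_le h0 fun k hk => biSup_finset_le h0 fun m hm => ?_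
      rw [Finset.mem_Icc] at hk hm
      refine Real.iSup_le (fun i => Real.iSup_le (fun v => ?_) h0) h0
      have hv := v.2
      exact (mtChain_le_mtPow_max hA hB k v.1 i i).trans
        (mtPow_diag_le_mtTr hC (by omega) (by omega) i)
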